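/- arXiv:1409.6020 — 2 statements merged into one kernel-verified Lean document; each statement's English description precedes it below -/
import Mathlib

section
/- Let F be a finite field with q elements where q ≡ 1 (mod 9), let K = ℚ(ζ) be the 9th cyclotomic field where ζ is a primitive 9th root of unity, and let χ : F → K be a multiplicative character of exact order 9 (extended by χ(0) = 0). Then the number of pairs (x,y) ∈ F × F satisfying y³ = x⁴ − x equals q + Tr_{K/ℚ}( Σ_{x∈F} χ(x)⁶ · χ(1−x) ), an equality of rational numbers. -/
/-!
Write `ψ = χ³`, a cubic character. For `a : F` the equation `y³ = a` has `1 + ψ(a) + ψ²(a)`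
solutions (`natCast_card_cube_eq`), so the number of affine points is
`q + ∑ ψ(x⁴ - x) + ∑ ψ²(x⁴ - x)`. Substituting `x ↦ x⁻¹` turns
`ψ(x⁴ - x)` into `χ²(x³) χ³(1 - x³)` and `ψ²(x⁴ - x)` into `χ⁴(x³) χ⁶(1 - x³)`. Both are functions
of `u = x³`; weighting each `u` by its number of cube roots `1 + χ³(u) + χ⁶(u)`
gives the six sums `∑ χᵏ(u) χ⁶ᵏ(1 - u)` with `k ∈ {2, 5, 8}` and `k ∈ {4, 7, 1}`. These are
exactly the Galois conjugates of the Jacobi sum, since the automorphisms of `ℚ(ζ₉)` act on ninth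
roots of unity as `k`-th powers for `k ∈ (ℤ/9)ˣ`.
-/

section CharacterOfOrderNine

variable {F : Type*} [Field F] {K : Type*} [Field K]

lemma chi_pow_nine {χ : MulChar F K} (hχ : orderOf χ = 9) {a : F} (ha : a ≠ 0) :
    χ a ^ 9 = 1 := by
  rw [← MulChar.pow_apply' χ (by norm_num), ← hχ, pow_orderOf_eq_one]
  exact MulChar.one_apply (isUnit_iff_ne_zero.mpr ha)

lemma chi_pow_ten {χ : MulChar F K} (hχ : orderOf χ = 9) (a : F) :
    χ a ^ 10 = χ a := by
  rcases eq_or_ne a 0 with rfl | ha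
  · simp [MulChar.map_zero]
  · rw [pow_succ, chi_pow_nine hχ ha, one_mul]

/-- The character value at the right-hand side of the curve equation, after `x ↦ x⁻¹`. -/
lemma chi_quartic_inv {χ : MulChar F K} (hχ : orderOf χ = 9) (x : F) :
    χ (x⁻¹ ^ 4 - x⁻¹) ^ 3 = χ (x ^ 3) ^ 2 * χ (1 - x ^ 3) ^ 3 := by
  rcases eq_or_ne x 0 with rfl | hx
  · simp [MulChar.map_zero]
  have h1 : x⁻¹ ^ 4 - x⁻¹ = x⁻¹ ^ 4 * (1 - x ^ 3) := by field_simp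
  have h2 : χ x⁻¹ * χ x = 1 := by rw [← map_mul, inv_mul_cancel₀ hx, map_one]
  have h3 := chi_pow_nine hχ hx
  have h4 : χ x⁻¹ ^ 12 = χ x ^ 6 := by
    calc χ x⁻¹ ^ 12 = χ x⁻¹ ^ 12 * (χ x ^ 9) ^ 2 := by rw [h3]; ring
      _ = (χ x⁻¹ * χ x) ^ 12 * χ x ^ 6 := by ring
      _ = χ x ^ 6 := by rw [h2]; ring
  rw [h1, map_mul, map_pow, map_pow, mul_pow, ← pow_mul, ← pow_mul, h4]

variable [Fintype F]

/-- The kernel of `χ³` on `Fˣ` consists of cubes: on a generator of `Fˣ` the character `χ` takes a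
value of order exactly 9. -/
lemma exists_cube_eq_of_chi_pow_three {χ : MulChar F K} (hχ : orderOf χ = 9) {a : F}
    (ha : a ≠ 0) (h : χ a ^ 3 = 1) : ∃ b : F, b ^ 3 = a := by
  obtain ⟨g, hg⟩ := IsCyclic.exists_monoid_generator (α := Fˣ)
  have hdvd (m : ℕ) (hm0 : m ≠ 0) (hm : χ g ^ m = 1) : 9 ∣ m := by
    rw [← hχ]
    apply orderOf_dvd_of_pow_eq_one
    ext u
    obtain ⟨n, hn⟩ := Submonoid.mem_powers_iff _ _ |>.mp (hg u)
    rw [← hn, MulChar.pow_apply' χ hm0, MulChar.one_apply_coe, Units.val_pow_eq_pow_val, map_pow,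
      ← pow_mul, mul_comm, pow_mul, hm, one_pow]
  obtain ⟨n, hn⟩ := Submonoid.mem_powers_iff _ _ |>.mp (hg (Units.mk0 a ha))
  have hn' : (g : F) ^ n = a := by simpa using congrArg Units.val hn
  rcases eq_or_ne n 0 with rfl | hn0
  · exact ⟨1, by simpa using hn'⟩
  rw [← hn', map_pow, ← pow_mul] at h
  obtain ⟨k, hk⟩ := hdvd _ (by positivity) h
  refine ⟨(g : F) ^ k, ?_⟩
  rw [← pow_mul, ← hn']
  congr 1
  omega

lemma exists_isPrimitiveRoot_three (h9 : Fintype.card F % 9 = 1) :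
    ∃ w : F, IsPrimitiveRoot w 3 := by
  classical
  obtain ⟨g, hg⟩ := IsCyclic.exists_ofOrder_eq_natCard (α := Fˣ)
  rw [Nat.card_eq_fintype_card, Fintype.card_units] at hg
  have hc : 1 < Fintype.card F := Fintype.one_lt_card
  have hp := (IsPrimitiveRoot.orderOf g).pow (a := (Fintype.card F - 1) / 3) (b := 3)
    (by omega) (by omega)
  exact ⟨_, IsPrimitiveRoot.coe_units_iff.mpr hp⟩

open Classical in
lemma natCast_card_cube_eq (h9 : Fintype.card F % 9 = 1) {χ : MulChar F K} (hχ : orderOf χ = 9)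
    (a : F) :
    ((Finset.univ.filter fun y : F => y ^ 3 = a).card : K) = 1 + χ a ^ 3 + χ a ^ 6 := by
  rcases eq_or_ne a 0 with rfl | ha
  · have h0 : (Finset.univ.filter fun y : F => y ^ 3 = 0) = {0} := by
      ext y
      simp
    rw [h0]
    simp [MulChar.map_zero]
  by_cases h : ∃ b : F, b ^ 3 = a
  · obtain ⟨w, hw⟩ := exists_isPrimitiveRoot_three h9
    have hcard : (Finset.univ.filter fun y : F => y ^ 3 = a).card = 3 := by
      have h1 := hw.card_nthRoots a
      rw [if_pos h] at h1
      rw [← Multiset.toFinset_card_of_nodup (hw.nthRoots_nodup ha)] at h1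
      refine Eq.trans (congrArg Finset.card ?_) h1
      ext y
      simp [Polynomial.mem_nthRoots]
    obtain ⟨b, rfl⟩ := h
    have hb : b ≠ 0 := by rintro rfl; simp at ha
    have h9b := chi_pow_nine hχ hb
    rw [hcard, map_pow, ← pow_mul, ← pow_mul, h9b, show 3 * 6 = 9 * 2 from rfl, pow_mul, h9b]
    norm_num
  · have hne : χ a ^ 3 - 1 ≠ 0 := fun h' =>
      h (exists_cube_eq_of_chi_pow_three hχ ha (sub_eq_zero.mp h'))
    have h0 : (Finset.univ.filter fun y : F => y ^ 3 = a) = ∅ := by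
      ext y
      simpa using fun hy => h ⟨y, hy⟩
    rw [h0]
    apply mul_left_cancel₀ hne
    have := chi_pow_nine hχ ha
    simp only [Finset.card_empty, Nat.cast_zero, mul_zero]
    linear_combination -this

lemma sum_comp_cube (h9 : Fintype.card F % 9 = 1) {χ : MulChar F K} (hχ : orderOf χ = 9)
    (f : F → K) :
    ∑ x : F, f (x ^ 3) = ∑ u : F, (1 + χ u ^ 3 + χ u ^ 6) * f u := by
  classical
  rw [← Finset.sum_fiberwise Finset.univ (fun x : F => x ^ 3)]
  refine Finset.sum_congr rfl fun u _ => ?_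
  rw [← natCast_card_cube_eq h9 hχ u, ← nsmul_eq_mul, ← Finset.sum_const]
  refine Finset.sum_congr rfl fun x hx => ?_
  rw [(Finset.mem_filter.mp hx).2]

lemma natCast_card_points (h9 : Fintype.card F % 9 = 1) {χ : MulChar F K} (hχ : orderOf χ = 9) :
    (Nat.card {p : F × F // p.2 ^ 3 = p.1 ^ 4 - p.1} : K)
      = Fintype.card F + ∑ x : F, (χ (x ^ 4 - x) ^ 3 + χ (x ^ 4 - x) ^ 6) := by
  classical
  have e : {p : F × F // p.2 ^ 3 = p.1 ^ 4 - p.1} ≃ Σ x : F, {y : F // y ^ 3 = x ^ 4 - x} :=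
    { toFun p := ⟨p.1.1, p.1.2, p.2⟩
      invFun s := ⟨(s.1, s.2.1), s.2.2⟩ }
  rw [Nat.card_congr e, Nat.card_eq_fintype_card, Fintype.card_sigma, Nat.cast_sum]
  simp_rw [Fintype.card_subtype, natCast_card_cube_eq h9 hχ, add_assoc, Finset.sum_add_distrib]
  simp

/-- The affine point count as a sum of six Jacobi sums. -/
lemma natCast_card_points_eq_sum (h9 : Fintype.card F % 9 = 1) {χ : MulChar F K}
    (hχ : orderOf χ = 9) :
    (Nat.card {p : F × F // p.2 ^ 3 = p.1 ^ 4 - p.1} : K)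
      = Fintype.card F + ∑ x : F, (1 + χ x ^ 3 + χ x ^ 6) *
          (χ x ^ 2 * χ (1 - x) ^ 3 + χ x ^ 4 * χ (1 - x) ^ 6) := by
  rw [natCast_card_points h9 hχ, ← sum_comp_cube h9 hχ
    (fun u => χ u ^ 2 * χ (1 - u) ^ 3 + χ u ^ 4 * χ (1 - u) ^ 6),
    ← Equiv.sum_comp (Equiv.inv F)]
  congr 1
  refine Finset.sum_congr rfl fun x _ => ?_
  have h := chi_quartic_inv hχ x
  simp only [Equiv.inv_apply]
  linear_combination h +
    (χ (x⁻¹ ^ 4 - x⁻¹) ^ 3 + χ (x ^ 3) ^ 2 * χ (1 - x ^ 3) ^ 3) * h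

end CharacterOfOrderNine

lemma sum_units_zmod_nine {M : Type*} [AddCommMonoid M] (f : ℕ → M) :
    ∑ k : (ZMod 9)ˣ, f (k : ZMod 9).val = f 1 + f 2 + f 4 + f 5 + f 7 + f 8 := by
  have h : (Finset.univ : Finset (ZMod 9)ˣ).val.map (fun k : (ZMod 9)ˣ => (k : ZMod 9).val)
      = {1, 2, 4, 5, 7, 8} := by decide
  calc ∑ k : (ZMod 9)ˣ, f (k : ZMod 9).val
      = ((Finset.univ.val.map fun k : (ZMod 9)ˣ => (k : ZMod 9).val).map f).sum := by
        rw [Multiset.map_map]; rfl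
    _ = _ := by rw [h]; simp [add_assoc]

/-- The trace from `ℚ(ζ₉)` to `ℚ` of an expression in ninth roots of unity: each conjugate replaces
them by their `k`-th powers, for `k` in `{1, 2, 4, 5, 7, 8}`. -/
lemma algebraMap_trace_cyclotomic_nine (z : CyclotomicField 9 ℚ) (f : ℕ → CyclotomicField 9 ℚ)
    (hf : ∀ (σ : CyclotomicField 9 ℚ ≃ₐ[ℚ] CyclotomicField 9 ℚ) (k : ℕ), k ≠ 0 →
      (∀ w : CyclotomicField 9 ℚ, w ^ 9 = 1 → σ w = w ^ k) → σ z = f k) :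
    algebraMap ℚ (CyclotomicField 9 ℚ) (Algebra.trace ℚ (CyclotomicField 9 ℚ) z)
      = f 1 + f 2 + f 4 + f 5 + f 7 + f 8 := by
  have : IsCyclotomicExtension {9} ℚ (CyclotomicField 9 ℚ) :=
    CyclotomicField.isCyclotomicExtension 9 ℚ
  have : IsGalois ℚ (CyclotomicField 9 ℚ) := IsCyclotomicExtension.isGalois {9} ℚ _
  have hirr := Polynomial.cyclotomic.irreducible_rat (n := 9) (by norm_num)
  let e := IsCyclotomicExtension.autEquivPow (CyclotomicField 9 ℚ) hirr
  rw [trace_eq_sum_automorphisms, ← sum_units_zmod_nine, ← e.toEquiv.sum_comp]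
  refine Finset.sum_congr rfl fun σ _ => hf σ _ ?_ fun w hw => ?_
  · rw [Ne, ZMod.val_eq_zero]
    have : Nontrivial (ZMod 9) := ZMod.nontrivial_iff.mpr (by norm_num)
    exact Units.ne_zero _
  have hζ := IsCyclotomicExtension.zeta_spec 9 ℚ (CyclotomicField 9 ℚ)
  obtain ⟨i, -, rfl⟩ := hζ.eq_pow_of_pow_eq_one hw
  have hσ : σ (IsCyclotomicExtension.zeta 9 ℚ (CyclotomicField 9 ℚ)) =
      IsCyclotomicExtension.zeta 9 ℚ (CyclotomicField 9 ℚ) ^ ((e σ : (ZMod 9)ˣ) : ZMod 9).val :=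
    (hζ.autToPow_spec ℚ σ).symm
  rw [map_pow, hσ, ← pow_mul, ← pow_mul, mul_comm]
  rfl


/-- Let `F` be a finite field with `q ≡ 1 (mod 9)`, let `K = ℚ(ζ)` be the 9th
cyclotomic field, and let `χ : F → K` be a multiplicative character of exact order 9
(with `χ 0 = 0`). Then the number of pairs `(x, y) ∈ F × F` with `y³ = x⁴ − x` equals
`q + Tr_{K/ℚ}(∑_{x ∈ F} χ(x)⁶ χ(1 − x))`, as rational numbers. -/
theorem affine_point_count_of_one_mod_nine
    (F : Type*) [Field F] [Fintype F]
    (h9 : Fintype.card F % 9 = 1)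
    (χ : MulChar F (CyclotomicField 9 ℚ)) (hχ : orderOf χ = 9) :
    (Nat.card {p : F × F // p.2 ^ 3 = p.1 ^ 4 - p.1} : ℚ)
      = (Fintype.card F : ℚ)
        + Algebra.trace ℚ (CyclotomicField 9 ℚ) (∑ x : F, χ x ^ 6 * χ (1 - x)) := by
  apply (algebraMap ℚ (CyclotomicField 9 ℚ)).injective
  rw [map_add, map_natCast, map_natCast, natCast_card_points_eq_sum h9 hχ,
    algebraMap_trace_cyclotomic_nine _
      (fun k => ∑ x : F, χ (1 - x) ^ (6 * k) * χ x ^ k)]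
  · simp only [← Finset.sum_add_distrib]
    congr 1
    refine Finset.sum_congr rfl fun x _ => ?_
    have hx := chi_pow_ten hχ x
    have hy := chi_pow_ten hχ (1 - x)
    generalize χ x = w at *
    generalize χ (1 - x) = v at *
    have h12 : v ^ 12 = v ^ 3 := by linear_combination v ^ 2 * hy
    have h24 : v ^ 24 = v ^ 6 := by linear_combination (v ^ 12 + v ^ 3) * h12
    have h30 : v ^ 30 = v ^ 3 := by linear_combination v ^ 6 * h24 + h12
    have h42 : v ^ 42 = v ^ 6 := by linear_combination v ^ 12 * h30 + v ^ 3 * h12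
    have h48 : v ^ 48 = v ^ 3 := by linear_combination v ^ 6 * h42 + h12
    norm_num only
    rw [h12, h24, h30, h42, h48]
    linear_combination v ^ 6 * hx
  · intro σ k hk0 hk
    have hσ (a : F) : σ (χ a) = χ a ^ k := by
      rcases eq_or_ne a 0 with rfl | ha
      · simp [MulChar.map_zero, hk0]
      · exact hk _ (chi_pow_nine hχ ha)
    rw [map_sum, ← Equiv.sum_comp (Equiv.subLeft (1 : F))]
    refine Finset.sum_congr rfl fun x _ => ?_
    simp only [Equiv.subLeft_apply, sub_sub_cancel, map_mul, map_pow, hσ]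
    ring
end

section
/- Let K = ℚ(ζ) be the 9th cyclotomic field where ζ is a primitive 9th root of unity, let 𝒪 be its ring of integers, and let 𝔪 be the ideal of 𝒪 generated by (1 + ζ + ζ⁴)⁴. Set ε₀ = −ζ², ε₁ = ζ⁴ − ζ³ + ζ, ε₂ = ζ⁵ + ζ² − ζ. Then every unit of the quotient ring 𝒪/𝔪 is the image of ε₀^a ε₁^b ε₂^c for some integers 0 ≤ a < 18, 0 ≤ b < 9, 0 ≤ c < 3. -/
/-!
Write `π = 1 + ζ + ζ⁴` and `L = ζ - 1`. Both generate the prime of `𝒪` above `3`, and `3` is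
a unit times `L⁶`, so `𝒪/𝔪` is a quotient of `𝔽₃[L]/(L⁴)`: there `L⁴ = 0` and `3 = 0`
(`pow_four_eq_zero`, `three_eq_zero`), and since `𝒪 = ℤ[ζ]` every class is
`x₀ + x₁ L + x₂ L² + x₃ L³` with integers `xᵢ` (`exists_expansion`). For a unit, `3 ∤ x₀`.

Modulo `𝔪`, `ε₀ = -(1 + L)²` and `ε₂ = 1 - L² + L³`, so the coefficients of `ε₀^a ε₂^c` are the
explicit functions of `a` and `c` given by the binomial theorem (`eps_product`). As `ε₀` has
order `18` and `ε₂` contributes a further factor `3`, the `54` products with `a < 18`, `c < 3` hit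
each of the `2 · 3³` coefficient vectors with `x₀ ≠ 0`; this is the finite check
`exists_exponents`. In particular the exponent `b = 0` always suffices.
-/

section Quotient

variable {R : Type*} [CommRing R]

/-- `ζ - 1` is a multiple of `1 + ζ + ζ⁴` by the minimal equation of `ζ`. -/
lemma pow_four_eq_zero {z : R} (hz : z ^ 6 + z ^ 3 + 1 = 0) (hm : (1 + z + z ^ 4) ^ 4 = 0) :
    (z - 1) ^ 4 = 0 := by
  -- The cofactor is `(ζ - 1) / (1 + ζ + ζ⁴)`, computed in `ℚ(ζ)`.
  have h : z - 1 = (-1 + z - z ^ 3 + z ^ 4 - z ^ 5) * (1 + z + z ^ 4) := by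
    linear_combination (z ^ 3 - z ^ 2 + z) * hz
  rw [h, mul_pow, hm, mul_zero]

/-- Expanding `Φ₉(1 + L) = 0` modulo `L⁴` gives `3 · (1 + 3L + 6L² + 7L³) = 0`, and the second
factor is invertible, with inverse
`1 - 3L + 3L² + 2L³`. -/
lemma three_eq_zero {L : R} (hL : L ^ 4 = 0) (hz : (1 + L) ^ 6 + (1 + L) ^ 3 + 1 = 0) :
    (3 : R) = 0 := by
  linear_combination (1 - 3 * L + 3 * L ^ 2 + 2 * L ^ 3) * hz -
    (2 * L ^ 5 + 15 * L ^ 4 + 45 * L ^ 3 + 70 * L ^ 2 + 60 * L + 24) * hL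

lemma one_add_pow_trunc {L : R} (hL : L ^ 4 = 0) (n : ℕ) :
    (1 + L) ^ n = 1 + n * L + n.choose 2 * L ^ 2 + n.choose 3 * L ^ 3 := by
  induction n with
  | zero => simp
  | succ n ih =>
    rw [pow_succ, ih, Nat.choose_succ_succ' n 1, Nat.choose_succ_succ' n 2, Nat.choose_one_right]
    push_cast
    linear_combination (n.choose 3 : R) * hL

lemma eps_two_pow {L : R} (hL : L ^ 4 = 0) (c : ℕ) :
    (1 - L ^ 2 + L ^ 3) ^ c = 1 - c * L ^ 2 + c * L ^ 3 := by
  induction c with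
  | zero => simp
  | succ c ih =>
    rw [pow_succ, ih]
    push_cast
    linear_combination (c : R) * (1 - 2 * L + L ^ 2) * hL

/-- The expansion of `ε₀^a ε₂^c` in powers of `L = ζ - 1`. -/
lemma eps_product {L : R} (hL : L ^ 4 = 0) (h3 : (3 : R) = 0) (a c : ℕ) :
    (-(1 + L) ^ 2) ^ a * ((1 + L) ^ 5 + (1 + L) ^ 2 - (1 + L)) ^ c =
      (-1) ^ a * (1 + 2 * a * L + ((2 * a).choose 2 - c) * L ^ 2 +
        ((2 * a).choose 3 - 2 * a * c + c) * L ^ 3) := by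
  have h2 : (1 + L) ^ 5 + (1 + L) ^ 2 - (1 + L) = 1 - L ^ 2 + L ^ 3 := by
    linear_combination (5 + L) * hL + (2 * L + 4 * L ^ 2 + 3 * L ^ 3) * h3
  rw [h2, eps_two_pow hL, neg_pow, ← pow_mul, one_add_pow_trunc hL]
  push_cast
  linear_combination (-1 : R) ^ a * (2 * a * c - (2 * a).choose 2 * c +
    ((2 * a).choose 2 - (2 * a).choose 3) * c * L + (2 * a).choose 3 * c * L ^ 2) * hL

/-- The expansions of the products `ε₀^a ε₂^c` exhaust the units of `𝔽₃[L]/(L⁴)`. -/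
lemma exists_exponents : ∀ x₀ x₁ x₂ x₃ : ZMod 3, x₀ ≠ 0 → ∃ a : Fin 18, ∃ c : Fin 3,
    x₀ = (-1) ^ a.val ∧ x₁ = (-1) ^ a.val * (2 * a.val) ∧
    x₂ = (-1) ^ a.val * ((2 * a.val).choose 2 - c.val) ∧
    x₃ = (-1) ^ a.val * ((2 * a.val).choose 3 - 2 * a.val * c.val + c.val) := by
  decide

lemma intCast_eq_of_zmod_three (h3 : (3 : R) = 0) {x y : ℤ} (h : (x : ZMod 3) = y) :
    (x : R) = y := by
  obtain ⟨k, hk⟩ := (ZMod.intCast_eq_intCast_iff_dvd_sub x y 3).1 h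
  have hk' : (y : R) - x = 3 * k := by exact_mod_cast congrArg (Int.cast : ℤ → R) hk
  linear_combination -hk' - (k : R) * h3

lemma exists_eps_product {L w : R} (hL : L ^ 4 = 0) (h3 : (3 : R) = 0) (hw : IsUnit w)
    (hx : ∃ x₀ x₁ x₂ x₃ : ℤ, w = x₀ + x₁ * L + x₂ * L ^ 2 + x₃ * L ^ 3) :
    ∃ a c : ℕ, a < 18 ∧ c < 3 ∧
      w = (-(1 + L) ^ 2) ^ a * ((1 + L) ^ 5 + (1 + L) ^ 2 - (1 + L)) ^ c := by
  obtain ⟨x₀, x₁, x₂, x₃, hx⟩ := hx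
  rcases subsingleton_or_nontrivial R with _ | _
  · exact ⟨0, 0, by norm_num, by norm_num, Subsingleton.elim _ _⟩
  -- If `3 ∣ x₀`, then `w` is a multiple of `L`, hence nilpotent.
  have h0 : (x₀ : ZMod 3) ≠ 0 := by
    intro h
    have h' : (x₀ : R) = 0 := by
      simpa using intCast_eq_of_zmod_three (R := R) h3 (x := x₀) (y := 0) (by simpa using h)
    refine (hw.pow 4).ne_zero ?_
    have : w = L * (x₁ + x₂ * L + x₃ * L ^ 2) := by rw [hx, h']; ring
    rw [this, mul_pow, hL, zero_mul]
  obtain ⟨a, c, e₀, e₁, e₂, e₃⟩ := exists_exponents x₀ x₁ x₂ x₃ h0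
  have f₀ := intCast_eq_of_zmod_three (R := R) h3 (x := x₀) (y := (-1) ^ a.val)
    (by push_cast; exact e₀)
  have f₁ := intCast_eq_of_zmod_three (R := R) h3 (x := x₁) (y := (-1) ^ a.val * (2 * a.val))
    (by push_cast; exact e₁)
  have f₂ := intCast_eq_of_zmod_three (R := R) h3 (x := x₂)
    (y := (-1) ^ a.val * ((2 * a.val).choose 2 - c.val)) (by push_cast; exact e₂)
  have f₃ := intCast_eq_of_zmod_three (R := R) h3 (x := x₃)
    (y := (-1) ^ a.val * ((2 * a.val).choose 3 - 2 * a.val * c.val + c.val))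
    (by push_cast; exact e₃)
  push_cast at f₀ f₁ f₂ f₃
  refine ⟨a, c, a.isLt, c.isLt, ?_⟩
  rw [eps_product hL h3, hx, f₀, f₁, f₂, f₃]
  ring

/-- If `A = ℤ[ζ]` and `(ζ - 1)⁴` vanishes in `R`, then the image of `A` in `R` is spanned by
`1, L, L², L³`, where `L` is the image of `ζ - 1`. -/
lemma exists_expansion {A : Type*} [CommRing A] {z : A} (htop : Algebra.adjoin ℤ {z} = ⊤)
    (f : A →+* R) {L : R} (hf : f z = 1 + L) (hL : L ^ 4 = 0) (t : A) :
    ∃ x₀ x₁ x₂ x₃ : ℤ, f t = x₀ + x₁ * L + x₂ * L ^ 2 + x₃ * L ^ 3 := by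
  have ht : t ∈ Algebra.adjoin ℤ {z} := htop ▸ Algebra.mem_top
  induction ht using Algebra.adjoin_induction with
  | mem x hx =>
    rw [Set.mem_singleton_iff] at hx
    exact ⟨1, 1, 0, 0, by rw [hx, hf]; simp⟩
  | algebraMap r => exact ⟨r, 0, 0, 0, by simp⟩
  | add x y _ _ hx hy =>
    obtain ⟨x₀, x₁, x₂, x₃, hx⟩ := hx
    obtain ⟨y₀, y₁, y₂, y₃, hy⟩ := hy
    refine ⟨x₀ + y₀, x₁ + y₁, x₂ + y₂, x₃ + y₃, ?_⟩
    rw [map_add, hx, hy]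
    push_cast
    ring
  | mul x y _ _ hx hy =>
    obtain ⟨x₀, x₁, x₂, x₃, hx⟩ := hx
    obtain ⟨y₀, y₁, y₂, y₃, hy⟩ := hy
    refine ⟨x₀ * y₀, x₀ * y₁ + x₁ * y₀, x₀ * y₂ + x₁ * y₁ + x₂ * y₀,
      x₀ * y₃ + x₁ * y₂ + x₂ * y₁ + x₃ * y₀, ?_⟩
    rw [map_mul, hx, hy]
    push_cast
    linear_combination ((x₁ : R) * y₃ + x₂ * y₂ + x₃ * y₁ + (x₂ * y₃ + x₃ * y₂) * L +
      x₃ * y₃ * L ^ 2) * hL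

end Quotient

open NumberField

/-- Every unit of `𝒪/𝔪`, where `𝔪 = ((1 + ζ + ζ⁴)⁴)` in the ring of integers of the
9th cyclotomic field, is the image of `ε₀^a ε₁^b ε₂^c` for some `0 ≤ a < 18`,
`0 ≤ b < 9`, `0 ≤ c < 3`. -/
theorem units_of_quotient_exhausted
    (K : Type*) [Field K] [NumberField K] [IsCyclotomicExtension {9} ℚ K]
    (ζ : 𝓞 K) (hζ : IsPrimitiveRoot ζ 9) :
    let ε₀ : 𝓞 K := -ζ ^ 2
    let ε₁ : 𝓞 K := ζ ^ 4 - ζ ^ 3 + ζ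
    let ε₂ : 𝓞 K := ζ ^ 5 + ζ ^ 2 - ζ
    let m : Ideal (𝓞 K) := Ideal.span {(1 + ζ + ζ ^ 4) ^ 4}
    ∀ w : (𝓞 K ⧸ m)ˣ, ∃ a b c : ℕ, a < 18 ∧ b < 9 ∧ c < 3 ∧
      (w : 𝓞 K ⧸ m) = Ideal.Quotient.mk m (ε₀ ^ a * ε₁ ^ b * ε₂ ^ c) := by
  intro ε₀ ε₁ ε₂ m w
  have hmin : ζ ^ 6 + ζ ^ 3 + 1 = 0 := by
    have h9 : (ζ ^ 3 - 1) * (ζ ^ 6 + ζ ^ 3 + 1) = 0 := by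
      linear_combination hζ.pow_eq_one
    refine (mul_eq_zero.1 h9).resolve_left fun h => ?_
    exact hζ.pow_ne_one_of_pos_of_lt (by norm_num) (by norm_num : 3 < 9) (sub_eq_zero.1 h)
  have htop : Algebra.adjoin ℤ {ζ} = ⊤ := by
    have hK : IsPrimitiveRoot (ζ : K) 9 := hζ.map_of_injective RingOfIntegers.coe_injective
    have h := hK.integralPowerBasis.adjoin_gen_eq_top
    rw [hK.integralPowerBasis_gen] at h
    exact h
  set q := Ideal.Quotient.mk m with hq
  have hz : q ζ ^ 6 + q ζ ^ 3 + 1 = 0 := by simpa using congrArg q hmin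
  have hm : (1 + q ζ + q ζ ^ 4) ^ 4 = 0 := by
    have : q ((1 + ζ + ζ ^ 4) ^ 4) = 0 :=
      Ideal.Quotient.eq_zero_iff_mem.2 (Ideal.mem_span_singleton_self _)
    simpa using this
  have hL := pow_four_eq_zero hz hm
  have hζL : q ζ = 1 + (q ζ - 1) := by ring
  have h3 := three_eq_zero hL (by rwa [← hζL])
  obtain ⟨t, ht⟩ := Ideal.Quotient.mk_surjective (w : 𝓞 K ⧸ m)
  obtain ⟨a, c, ha, hc, h⟩ := exists_eps_product hL h3 w.isUnit
    (ht ▸ exists_expansion htop q hζL hL t)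
  refine ⟨a, 0, c, ha, by norm_num, hc, ?_⟩
  rw [h, ← hζL]
  simp [ε₀, ε₂]
end
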